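/- Let ℓ ≥ 2 and S = ℂ[z_1,…,z_ℓ]. Let α_1,…,α_n (n ≥ 2) be pairwise non-proportional nonzero linear forms on ℂ^ℓ and Q = ∏_{i=1}^n α_i. Fix a pair i ≠ j, let P = (α_i, α_j) be the corresponding height-two prime, and let Q_X = ∏_{k : α_k ∈ P} α_k (the product of those linear forms lying in the span of α_i and α_j, equivalently of those forms vanishing on X = ker α_i ∩ ker α_j). Then the extensions of J(Q) and of J(Q_X) to the localization S_P of S at P coincide: J(Q)·S_P = J(Q_X)·S_P. Consequently the P-primary component of J(Q) is J(Q_X). -/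

import Mathlib

/-!
Write `Q = Q_X R`, where `R` is the product of the forms outside `P = (α, β)`; it is a unit at `P`.
The partial Euler derivation `θ = α ∂_α + β ∂_β` (`exists_euler`) multiplies `Q_X` by its degree
`m > 0`, so `Q_X ∈ J(Q_X)` and hence `J(Q) ⊆ J(Q_X)`. On the other hand
`θ(Q) = Q_X (m R + θ R) ∈ J(Q)`, where `θ R ∈ P` and therefore `m R + θ R ∉ P`. So `Q_X` lies in
`J(Q)` locally at `P`, and by the Leibniz rule so do its partial derivatives: the element
`(m R + θ R) R ∉ P` multiplies `J(Q_X)` into `J(Q)`. This gives the equality of localizations.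

For the primary component it remains to see that `J(Q_X)` is saturated with respect to the
complement of `P`. The Nullstellensatz gives `P ⊆ √J(Q_X)` (`span_le_radical_jac`): the forms
dividing `Q_X` are pairwise independent, so the singular points of `Q_X = 0` lie on `α = β = 0`.
In linear coordinates beginning with `α, β` (`exists_coordinates`), `J(Q_X)` is extended from
an ideal `J` of `A = ℂ[α, β]` (`jac_aeval`). An element outside `P` is then a nonzero polynomial
with scalar coefficients in the remaining variables plus an element of `P`, which is nilpotent
modulo `J(Q_X)`. The former is a nonzerodivisor modulo the extension of `J`, since `A / J` is free
over `ℂ` (`mem_map_C_of_scalar_mul`), so the sum is one as well (`mem_map_C_of_mul`,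
`jac_saturated`).
-/


open MvPolynomial

open scoped Classical

/-- The linear form with coefficient vector `a`, as a polynomial. -/
noncomputable def lin {ℓ : ℕ} (a : Fin ℓ → ℂ) : MvPolynomial (Fin ℓ) ℂ :=
  ∑ k, C (a k) * X k

/-- The Jacobian ideal of a polynomial `Q`, generated by its partial derivatives. -/
noncomputable def jac {ℓ : ℕ} (Q : MvPolynomial (Fin ℓ) ℂ) :
    Ideal (MvPolynomial (Fin ℓ) ℂ) :=
  Ideal.span (Set.range fun k => pderiv k Q)


/-! ### Linear forms and directional derivatives -/

lemma lin_add {ℓ : ℕ} (v w : Fin ℓ → ℂ) : lin (v + w) = lin v + lin w := by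
  simp [lin, add_mul, Finset.sum_add_distrib]

lemma lin_smul {ℓ : ℕ} (c : ℂ) (v : Fin ℓ → ℂ) : lin (c • v) = C c * lin v := by
  simp [lin, Finset.mul_sum, mul_assoc]

lemma lin_sum {ℓ : ℕ} {τ : Type*} (s : Finset τ) (c : τ → ℂ) (v : τ → Fin ℓ → ℂ) :
    lin (∑ t ∈ s, c t • v t) = ∑ t ∈ s, C (c t) * lin (v t) := by
  induction s using Finset.induction_on with
  | empty => simp [lin]
  | insert t s ht ih => rw [Finset.sum_insert ht, Finset.sum_insert ht, lin_add, ih, lin_smul]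

lemma lin_single {ℓ : ℕ} (k : Fin ℓ) : lin (Pi.single k 1) = X k := by
  unfold lin
  rw [Finset.sum_eq_single k]
  · simp
  · intro b _ hb
    simp [Pi.single_eq_of_ne hb]
  · simp

lemma pderiv_lin {ℓ : ℕ} (v : Fin ℓ → ℂ) (k : Fin ℓ) : pderiv k (lin v) = C (v k) := by
  unfold lin
  rw [map_sum, Finset.sum_eq_single k]
  · simp
  · intro b _ hb
    simp [pderiv_X_of_ne hb]
  · simp

/-- The directional derivative along the constant vector field `u`. -/
noncomputable def dirDer {ℓ : ℕ} (u : Fin ℓ → ℂ) :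
    Derivation ℂ (MvPolynomial (Fin ℓ) ℂ) (MvPolynomial (Fin ℓ) ℂ) :=
  ∑ k, (C (u k) : MvPolynomial (Fin ℓ) ℂ) • pderiv k

lemma dirDer_apply {ℓ : ℕ} (u : Fin ℓ → ℂ) (p : MvPolynomial (Fin ℓ) ℂ) :
    dirDer u p = ∑ k, C (u k) * pderiv k p := by
  unfold dirDer
  rw [← Derivation.coeFnAddMonoidHom_apply, map_sum, Finset.sum_apply]
  rfl

lemma pderiv_mem_jac {ℓ : ℕ} (k : Fin ℓ) (p : MvPolynomial (Fin ℓ) ℂ) :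
    pderiv k p ∈ jac p :=
  Ideal.subset_span ⟨k, rfl⟩

lemma dirDer_mem_jac {ℓ : ℕ} (u : Fin ℓ → ℂ) (p : MvPolynomial (Fin ℓ) ℂ) :
    dirDer u p ∈ jac p := by
  rw [dirDer_apply]
  exact Ideal.sum_mem _ fun k _ => Ideal.mul_mem_left _ _ (pderiv_mem_jac k p)

lemma dirDer_lin {ℓ : ℕ} (u v : Fin ℓ → ℂ) : dirDer u (lin v) = C (∑ k, u k * v k) := by
  rw [dirDer_apply]
  simp [pderiv_lin]

/-- If a derivation fixes every factor of a product, the product is an eigenvector whose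
eigenvalue is the number of factors. -/
lemma derivation_prod_eigen {R : Type*} [CommRing R] [Algebra ℂ R] (D : Derivation ℂ R R)
    {τ : Type*} (s : Finset τ) (f : τ → R) (h : ∀ t ∈ s, D (f t) = f t) :
    D (∏ t ∈ s, f t) = (s.card : R) * ∏ t ∈ s, f t := by
  induction s using Finset.induction_on with
  | empty => simp
  | insert t s ht ih =>
    rw [Finset.prod_insert ht, Derivation.leibniz, ih fun r hr => h r (Finset.mem_insert_of_mem hr),
      h t (Finset.mem_insert_self t s), Finset.card_insert_of_notMem ht]
    simp only [smul_eq_mul]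
    push_cast
    ring

/-- A linear form in the ideal `(α, β)` is a linear combination of `α` and `β`: the coefficients
are the constant terms of those of any representation. -/
lemma exists_of_lin_mem {ℓ : ℕ} {v a b : Fin ℓ → ℂ}
    (h : lin v ∈ Ideal.span ({lin a, lin b} : Set (MvPolynomial (Fin ℓ) ℂ))) :
    ∃ c d : ℂ, v = c • a + d • b := by
  obtain ⟨f, g, hfg⟩ := Ideal.mem_span_pair.mp h
  have h0 : ∀ w : Fin ℓ → ℂ, constantCoeff (lin w) = 0 := by
    intro w; simp [lin]
  refine ⟨constantCoeff f, constantCoeff g, funext fun k => ?_⟩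
  have := congrArg (fun p => constantCoeff (pderiv k p)) hfg
  simpa [pderiv_lin, pderiv_mul, h0] using this.symm

/-- The chain rule for substituting two polynomials in a binary polynomial. -/
lemma pderiv_aeval_two {ℓ : ℕ} (g : Fin 2 → MvPolynomial (Fin ℓ) ℂ) (k : Fin ℓ)
    (F : MvPolynomial (Fin 2) ℂ) :
    pderiv k (aeval g F) = aeval g (pderiv 0 F) * pderiv k (g 0)
      + aeval g (pderiv 1 F) * pderiv k (g 1) := by
  induction F using MvPolynomial.induction_on with
  | C c => simp [algebraMap_eq]
  | add p q hp hq => simp only [map_add, hp, hq]; ring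
  | mul_X p t hp =>
    have hX : ∀ r t : Fin 2, pderiv r (X t : MvPolynomial (Fin 2) ℂ) = if r = t then 1 else 0 := by
      intro r t
      rw [pderiv_X, Pi.single_apply]
      simp only [eq_comm]
    rw [map_mul, aeval_X, pderiv_mul, pderiv_mul, pderiv_mul, hp, hX, hX]
    fin_cases t
    · simp only [map_add, map_mul, aeval_X, Fin.zero_eta, if_true, one_ne_zero, if_false, map_one,
        map_zero]
      ring
    · simp only [map_add, map_mul, aeval_X, Fin.mk_one, if_true, zero_ne_one, if_false, map_one,
        map_zero]
      ring

/-! ### Ideals extended from the coefficient ring -/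

/-- A nonzero polynomial `s₀` with scalar coefficients is a nonzerodivisor modulo an ideal
extended from the coefficient algebra. A linear functional on the coefficients, vanishing on `J`,
reduces this to the absence of zero divisors in `MvPolynomial κ ℂ`. -/
lemma mem_map_C_of_scalar_mul {A : Type*} [CommRing A] [Algebra ℂ A] {κ : Type*}
    (J : Ideal A) (s₀ : MvPolynomial κ ℂ) (hs : s₀ ≠ 0) (g : MvPolynomial κ A)
    (h : MvPolynomial.map (algebraMap ℂ A) s₀ * g ∈ J.map (C : A →+* MvPolynomial κ A)) :
    g ∈ J.map (C : A →+* MvPolynomial κ A) := by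
  rw [mem_map_C_iff] at h ⊢
  by_contra! hg
  obtain ⟨m, hm⟩ := hg
  obtain ⟨φ, hφm, hφJ⟩ := Submodule.exists_le_ker_of_notMem
    (p := J.restrictScalars ℂ) hm
  -- `g'` is obtained from `g` by applying `φ` to each coefficient.
  let g' : MvPolynomial κ ℂ := ∑ e ∈ g.support, monomial e (φ (g.coeff e))
  have hg' : ∀ e, g'.coeff e = φ (g.coeff e) := by
    intro e
    simp only [g', coeff_sum, coeff_monomial]
    rw [Finset.sum_ite_eq']
    split_ifs with he
    · rfl
    · rw [notMem_support_iff.mp he, map_zero]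
  have hmul : s₀ * g' = 0 := by
    ext e
    have he : φ ((MvPolynomial.map (algebraMap ℂ A) s₀ * g).coeff e) = 0 := hφJ (h e)
    rw [coeff_mul, map_sum] at he
    rw [coeff_mul, coeff_zero, ← he]
    refine Finset.sum_congr rfl fun x _ => ?_
    rw [hg', coeff_map, ← Algebra.smul_def, map_smul, smul_eq_mul]
  have := (mul_eq_zero.mp hmul).resolve_left hs
  apply hφm
  rw [← hg', this, coeff_zero]

/-- An ideal extended from `ℂ[x₀, x₁]` whose radical contains `𝔪 = (x₀, x₁)` is saturated with
respect to elements outside `𝔪`. Such an element is a nonzero polynomial with scalar coefficients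
plus an element nilpotent modulo the ideal. -/
lemma mem_map_C_of_mul {κ : Type*} (J : Ideal (MvPolynomial (Fin 2) ℂ))
    (hrad : (Ideal.span {C (X 0), C (X 1)} : Ideal (MvPolynomial κ (MvPolynomial (Fin 2) ℂ)))
      ≤ (J.map (C : _ →+* MvPolynomial κ (MvPolynomial (Fin 2) ℂ))).radical)
    (s g : MvPolynomial κ (MvPolynomial (Fin 2) ℂ))
    (hs : s ∉ (Ideal.span {C (X 0), C (X 1)} :
      Ideal (MvPolynomial κ (MvPolynomial (Fin 2) ℂ))))
    (hsg : s * g ∈ J.map (C : _ →+* MvPolynomial κ (MvPolynomial (Fin 2) ℂ))) :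
    g ∈ J.map (C : _ →+* MvPolynomial κ (MvPolynomial (Fin 2) ℂ)) := by
  have hspan : (Ideal.span {C (X 0), C (X 1)} :
      Ideal (MvPolynomial κ (MvPolynomial (Fin 2) ℂ))) =
      (Ideal.span {X 0, X 1} : Ideal (MvPolynomial (Fin 2) ℂ)).map C := by
    rw [Ideal.map_span, Set.image_pair]
  have hker : ∀ p : MvPolynomial (Fin 2) ℂ,
      p - C (constantCoeff p) ∈ (Ideal.span {X 0, X 1} : Ideal (MvPolynomial (Fin 2) ℂ)) := by
    intro p
    induction p using MvPolynomial.induction_on with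
    | C c => simp
    | add p q hp hq =>
      have := Ideal.add_mem _ hp hq
      simp only [map_add]
      convert this using 1; ring
    | mul_X p t hp =>
      have : (X t : MvPolynomial (Fin 2) ℂ) ∈ Ideal.span {X 0, X 1} := by
        fin_cases t
        · exact Ideal.subset_span (by simp)
        · exact Ideal.subset_span (by simp)
      simpa using Ideal.mul_mem_left _ p this
  let s₀ : MvPolynomial κ ℂ := MvPolynomial.map constantCoeff s
  let S₀ : MvPolynomial κ (MvPolynomial (Fin 2) ℂ) := MvPolynomial.map (algebraMap ℂ _) s₀
  have hdiff : s - S₀ ∈ (Ideal.span {C (X 0), C (X 1)} :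
      Ideal (MvPolynomial κ (MvPolynomial (Fin 2) ℂ))) := by
    rw [hspan, mem_map_C_iff]
    intro m
    simpa [S₀, s₀, coeff_map, algebraMap_eq] using hker (s.coeff m)
  have hs₀ : s₀ ≠ 0 := by
    intro h0
    apply hs
    simpa [S₀, h0] using hdiff
  obtain ⟨N, hN⟩ := hrad hdiff
  refine mem_map_C_of_scalar_mul J (s₀ ^ N) (pow_ne_zero N hs₀) g ?_
  rw [map_pow]
  change S₀ ^ N * g ∈ _
  obtain ⟨q, hq⟩ := sub_dvd_pow_sub_pow S₀ (S₀ - s) N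
  have h1 : S₀ ^ N * g = q * (s * g) + (-1) ^ N * g * (s - S₀) ^ N := by
    have : (S₀ - s) ^ N = (-1) ^ N * (s - S₀) ^ N := by rw [← mul_pow]; ring
    rw [this] at hq
    linear_combination g * hq
  rw [h1]
  exact Ideal.add_mem _ (Ideal.mul_mem_left _ _ hsg) (Ideal.mul_mem_left _ _ hN)

/-! ### Linear coordinates adapted to two independent forms -/

lemma exists_basis {ℓ : ℕ} (a : Fin 2 → Fin ℓ → ℂ) (ha : LinearIndependent ℂ a) :
    ∃ (κ : Type) (_ : Fintype (κ ⊕ Fin 2)) (b : Module.Basis (κ ⊕ Fin 2) ℂ (Fin ℓ → ℂ)),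
      ∀ t, b (Sum.inr t) = a t := by
  let b := (Module.Basis.sumExtend ha).reindex (Equiv.sumComm _ _)
  refine ⟨_, @Fintype.ofFinite _ (Module.Finite.finite_basis b), b, fun t => ?_⟩
  simp [b, Module.Basis.sumExtend]
  rfl

/-- Two independent linear forms are the first two coordinates of a linear coordinate system. -/
lemma exists_coordinates {ℓ : ℕ} (a : Fin 2 → Fin ℓ → ℂ) (ha : LinearIndependent ℂ a) :
    ∃ (κ : Type) (e : MvPolynomial κ (MvPolynomial (Fin 2) ℂ) ≃ₐ[ℂ] MvPolynomial (Fin ℓ) ℂ),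
      ∀ F : MvPolynomial (Fin 2) ℂ, e (C F) = aeval (fun t => lin (a t)) F := by
  obtain ⟨κ, _, b, hb⟩ := exists_basis a ha
  let φ : MvPolynomial (κ ⊕ Fin 2) ℂ →ₐ[ℂ] MvPolynomial (Fin ℓ) ℂ :=
    aeval fun t => lin (b t)
  let φ' : MvPolynomial (Fin ℓ) ℂ →ₐ[ℂ] MvPolynomial (κ ⊕ Fin 2) ℂ :=
    aeval fun k => ∑ t, C (b.repr (Pi.single k 1) t) * X t
  have hφ'lin : ∀ v, φ' (lin v) = ∑ t, C (b.repr v t) * X t := by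
    intro v
    have hv : v = ∑ k, v k • (Pi.single k 1 : Fin ℓ → ℂ) := pi_eq_sum_univ' v
    conv_rhs => rw [hv]
    simp only [lin, map_sum, map_mul, φ', aeval_X, aeval_C, algebraMap_eq, map_smul,
      Finsupp.coe_finsetSum, Finset.sum_apply, Finsupp.smul_apply, smul_eq_mul, Finset.sum_mul,
      Finset.mul_sum, mul_assoc]
    rw [Finset.sum_comm]
  have h1 : φ.comp φ' = AlgHom.id ℂ _ := by
    ext1 k
    have hk := b.sum_repr (Pi.single k 1)
    simp only [AlgHom.comp_apply, φ', aeval_X, map_sum, map_mul, AlgHom.id_apply]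
    rw [← lin_single k, ← hk, lin_sum]
    refine Finset.sum_congr rfl fun t _ => ?_
    rw [hk]
    simp [φ, algebraMap_eq]
  have h2 : φ'.comp φ = AlgHom.id ℂ _ := by
    ext1 t
    simp only [AlgHom.comp_apply, φ, aeval_X, AlgHom.id_apply, hφ'lin, b.repr_self]
    rw [Finset.sum_eq_single t]
    · simp
    · intro r _ hr
      simp [Finsupp.single_eq_of_ne hr]
    · simp
  obtain ⟨E, hE⟩ : ∃ E : MvPolynomial (κ ⊕ Fin 2) ℂ ≃ₐ[ℂ] MvPolynomial (Fin ℓ) ℂ,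
      ∀ p, E p = φ p := ⟨AlgEquiv.ofAlgHom φ φ' h1 h2, fun _ => rfl⟩
  refine ⟨κ, (sumAlgEquiv ℂ κ (Fin 2)).symm.trans E, fun F => ?_⟩
  rw [AlgEquiv.trans_apply, hE]
  induction F using MvPolynomial.induction_on with
  | C c => rw [sumAlgEquiv_symm_C_C]; simp only [φ, aeval_C]
  | add p q hp hq => simp only [map_add, hp, hq]
  | mul_X p t hp =>
    rw [map_mul, map_mul, map_mul, map_mul, hp, sumAlgEquiv_symm_C_X]
    simp only [φ, aeval_X, hb]

/-- The vectors `u` produced for `t = 0, 1` are dual to the two independent forms. -/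
lemma exists_dual {ℓ : ℕ} (a : Fin 2 → Fin ℓ → ℂ) (ha : LinearIndependent ℂ a) (t : Fin 2) :
    ∃ u : Fin ℓ → ℂ, ∀ r, ∑ k, u k * a r k = if r = t then 1 else 0 := by
  obtain ⟨κ, _, b, hb⟩ := exists_basis a ha
  refine ⟨fun k => b.coord (Sum.inr t) (Pi.single k 1), fun r => ?_⟩
  have h : b.coord (Sum.inr t) (a r) = if r = t then 1 else 0 := by
    rw [← hb, Module.Basis.coord_apply, b.repr_self, Finsupp.single_apply]
    simp
  rw [← h]
  conv_rhs => rw [pi_eq_sum_univ' (a r)]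
  simp [mul_comm]

/-! ### Jacobian ideals of products in a pencil of linear forms -/

/-- The Nullstellensatz input: if a product of pairwise non-proportional forms in the span of `α`
and `β` lies in its Jacobian ideal, then the common zeros of its partial derivatives lie on
`α = β = 0`. At such a zero the product vanishes, so some factor does, and then so does a second
one, because the zero is a singular point of the product. -/
lemma span_le_radical_jac {ℓ : ℕ} {τ : Type*} (K : Finset τ) (v : τ → Fin ℓ → ℂ)
    (a b : Fin ℓ → ℂ)
    (hv0 : ∀ k ∈ K, v k ≠ 0)
    (hprop : ∀ k ∈ K, ∀ l ∈ K, k ≠ l → ∀ c : ℂ, v k ≠ c • v l)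
    (hspan : ∀ k ∈ K, ∃ c d : ℂ, v k = c • a + d • b)
    (hQ : ∏ k ∈ K, lin (v k) ∈ jac (∏ k ∈ K, lin (v k))) :
    Ideal.span {lin a, lin b} ≤ (jac (∏ k ∈ K, lin (v k))).radical := by
  rw [← vanishingIdeal_zeroLocus_eq_radical (K := ℂ)]
  suffices h : ∀ z ∈ zeroLocus ℂ (jac (∏ k ∈ K, lin (v k))),
      aeval z (lin a) = 0 ∧ aeval z (lin b) = 0 by
    rw [Ideal.span_le, Set.insert_subset_iff, Set.singleton_subset_iff]
    exact ⟨fun z hz => (h z hz).1, fun z hz => (h z hz).2⟩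
  intro z hz
  have hprod := hz _ hQ
  rw [map_prod, Finset.prod_eq_zero_iff] at hprod
  obtain ⟨k, hk, hkz⟩ := hprod
  obtain ⟨t, ht⟩ := Function.ne_iff.mp (hv0 k hk)
  have hder := hz _ (pderiv_mem_jac t _)
  rw [← Finset.mul_prod_erase K _ hk, pderiv_mul, pderiv_lin, map_add, map_mul, map_mul, hkz,
    zero_mul, add_zero, aeval_C, mul_eq_zero, map_prod, Finset.prod_eq_zero_iff] at hder
  obtain ⟨l, hl, hlz⟩ := hder.resolve_left ht
  obtain ⟨hlk, hl⟩ := Finset.mem_erase.mp hl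
  obtain ⟨c, d, hcd⟩ := hspan k hk
  obtain ⟨c', d', hcd'⟩ := hspan l hl
  have hdet : c * d' - d * c' ≠ 0 := by
    intro hdet
    by_cases hc : c' = 0
    · by_cases hd : d' = 0
      · exact hv0 l hl (by rw [hcd', hc, hd]; simp)
      · apply hprop k hk l hl hlk.symm (d / d')
        have hc0 : c = 0 := by
          rw [hc] at hdet
          simpa [hd] using hdet
        rw [hcd, hcd', hc, hc0, zero_smul, zero_add, zero_add, smul_smul, div_mul_cancel₀ _ hd]
    · apply hprop k hk l hl hlk.symm (c / c')
      rw [hcd, hcd', smul_add, smul_smul, smul_smul, div_mul_cancel₀ _ hc]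
      congr 2
      field_simp
      linear_combination -hdet
  rw [hcd, lin_add, lin_smul, lin_smul] at hkz
  rw [hcd', lin_add, lin_smul, lin_smul] at hlz
  simp only [map_add, map_mul, aeval_C, Algebra.algebraMap_self, RingHom.id_apply] at hkz hlz
  constructor
  · apply (mul_eq_zero.mp _).resolve_left hdet
    linear_combination d' * hkz - d * hlz
  · apply (mul_eq_zero.mp _).resolve_left hdet
    linear_combination c * hlz - c' * hkz

/-- The Jacobian ideal of a polynomial in two independent forms is the extension of the Jacobian
ideal of the binary polynomial. -/
lemma jac_aeval {ℓ : ℕ} (a : Fin 2 → Fin ℓ → ℂ) (ha : LinearIndependent ℂ a)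
    (F : MvPolynomial (Fin 2) ℂ) :
    jac (aeval (fun t => lin (a t)) F) =
      (jac F).map (aeval (fun t => lin (a t)) : MvPolynomial (Fin 2) ℂ →ₐ[ℂ] _) := by
  apply le_antisymm
  · rw [jac, Ideal.span_le]
    rintro _ ⟨k, rfl⟩
    change pderiv k _ ∈ _
    rw [pderiv_aeval_two]
    exact Ideal.add_mem _
      (Ideal.mul_mem_right _ _ (Ideal.mem_map_of_mem _ (pderiv_mem_jac 0 F)))
      (Ideal.mul_mem_right _ _ (Ideal.mem_map_of_mem _ (pderiv_mem_jac 1 F)))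
  · rw [Ideal.map_le_iff_le_comap, jac, Ideal.span_le]
    rintro _ ⟨t, rfl⟩
    obtain ⟨u, hu⟩ := exists_dual a ha t
    change aeval (fun t => lin (a t)) (pderiv t F) ∈ jac (aeval (fun t => lin (a t)) F)
    have key : dirDer u (aeval (fun t => lin (a t)) F) =
        aeval (fun t => lin (a t)) (pderiv t F) := by
      have h : ∀ r, ∑ k, C (u k) * pderiv k (lin (a r)) =
          (if r = t then 1 else 0 : MvPolynomial (Fin ℓ) ℂ) := by
        intro r
        rw [← dirDer_apply, dirDer_lin, hu]
        split_ifs <;> simp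
      rw [dirDer_apply]
      simp only [pderiv_aeval_two, mul_add, Finset.sum_add_distrib, mul_left_comm (C _)]
      rw [← Finset.mul_sum, ← Finset.mul_sum, h, h]
      fin_cases t <;> simp
    rw [← key]
    exact dirDer_mem_jac _ _

/-- The Jacobian ideal of a polynomial in two independent linear forms `α`, `β` is saturated
with respect to the complement of `(α, β)`, as soon as its radical contains `(α, β)`. -/
lemma jac_saturated {ℓ : ℕ} (a : Fin 2 → Fin ℓ → ℂ) (ha : LinearIndependent ℂ a)
    (F : MvPolynomial (Fin 2) ℂ)
    (hrad : Ideal.span {lin (a 0), lin (a 1)} ≤ (jac (aeval (fun t => lin (a t)) F)).radical)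
    (s g : MvPolynomial (Fin ℓ) ℂ) (hs : s ∉ Ideal.span {lin (a 0), lin (a 1)})
    (hsg : s * g ∈ jac (aeval (fun t => lin (a t)) F)) :
    g ∈ jac (aeval (fun t => lin (a t)) F) := by
  obtain ⟨κ, e, he⟩ := exists_coordinates a ha
  have hJ : jac (aeval (fun t => lin (a t)) F) =
      Ideal.map e ((jac F).map (C : _ →+* MvPolynomial κ (MvPolynomial (Fin 2) ℂ))) := by
    rw [jac_aeval a ha]
    simp only [jac, Ideal.map_span, ← Set.image_comp]
    congr 1
    exact Set.image_congr fun p _ => (he p).symm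
  have hPe : Ideal.span {lin (a 0), lin (a 1)} =
      Ideal.map e (Ideal.span {C (X 0), C (X 1)} :
        Ideal (MvPolynomial κ (MvPolynomial (Fin 2) ℂ))) := by
    rw [Ideal.map_span, Set.image_pair, he, he, aeval_X, aeval_X]
  have hmem : ∀ (I : Ideal (MvPolynomial κ (MvPolynomial (Fin 2) ℂ))) p,
      p ∈ Ideal.map e I ↔ e.symm p ∈ I := by
    intro I p
    constructor
    · intro h
      obtain ⟨q, hq, rfl⟩ := (Ideal.mem_map_iff_of_surjective e e.surjective).mp h
      simpa using hq
    · intro h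
      simpa using Ideal.mem_map_of_mem e h
  rw [hJ, hmem] at hsg ⊢
  rw [hPe, hmem] at hs
  rw [map_mul] at hsg
  refine mem_map_C_of_mul (jac F) ?_ _ _ hs hsg
  intro p hp
  have hep : e p ∈ Ideal.span {lin (a 0), lin (a 1)} := by
    rw [hPe, hmem]
    simpa using hp
  obtain ⟨N, hN⟩ := hrad hep
  refine ⟨N, ?_⟩
  rw [hJ, hmem] at hN
  simpa using hN

/-- The partial Euler derivation `α ∂_α + β ∂_β` attached to two independent forms `α`, `β`: it
fixes each form in their span and maps every `p` into `(α, β) ∩ J(p)`. -/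
lemma exists_euler {ℓ : ℕ} (a : Fin 2 → Fin ℓ → ℂ) (ha : LinearIndependent ℂ a) :
    ∃ θ : Derivation ℂ (MvPolynomial (Fin ℓ) ℂ) (MvPolynomial (Fin ℓ) ℂ),
      (∀ p, θ p ∈ Ideal.span {lin (a 0), lin (a 1)}) ∧ (∀ p, θ p ∈ jac p) ∧
      ∀ c d : ℂ, θ (lin (c • a 0 + d • a 1)) = lin (c • a 0 + d • a 1) := by
  obtain ⟨u, hu⟩ := exists_dual a ha 0
  obtain ⟨w, hw⟩ := exists_dual a ha 1
  refine ⟨lin (a 0) • dirDer u + lin (a 1) • dirDer w, fun p => ?_, fun p => ?_, fun c d => ?_⟩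
  · simp only [Derivation.add_apply, Derivation.smul_apply, smul_eq_mul]
    exact Ideal.add_mem _ (Ideal.mul_mem_right _ _ (Ideal.subset_span (by simp)))
      (Ideal.mul_mem_right _ _ (Ideal.subset_span (by simp)))
  · simp only [Derivation.add_apply, Derivation.smul_apply, smul_eq_mul]
    exact Ideal.add_mem _ (Ideal.mul_mem_left _ _ (dirDer_mem_jac _ _))
      (Ideal.mul_mem_left _ _ (dirDer_mem_jac _ _))
  · have hC : ∀ (D : Derivation ℂ (MvPolynomial (Fin ℓ) ℂ) (MvPolynomial (Fin ℓ) ℂ)) (c : ℂ) p,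
        D (C c * p) = C c * D p := by
      intro D c p
      rw [← smul_eq_C_mul, ← smul_eq_C_mul, D.map_smul]
    simp only [lin_add, lin_smul, map_add, Derivation.add_apply, Derivation.smul_apply,
      smul_eq_mul, hC, dirDer_lin, hu, hw]
    simp

/-- Localized at the prime `P = (α_i, α_j)` of a codimension-two intersection `X`, the
Jacobian ideal of the arrangement agrees with the Jacobian ideal of the subarrangement
`A_X`; consequently the `P`-primary component of `J(Q)` is `J(Q_X)`. -/
theorem jacobian_localization_at_codim_two_prime
    {ℓ n : ℕ} (hℓ : 2 ≤ ℓ) (hn : 2 ≤ n)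
    (a : Fin n → Fin ℓ → ℂ)
    (ha0 : ∀ i, a i ≠ 0)
    (haprop : ∀ i j, i ≠ j → ∀ c : ℂ, a i ≠ c • a j)
    (i j : Fin n) (hij : i ≠ j)
    (P : Ideal (MvPolynomial (Fin ℓ) ℂ))
    (hP : P = Ideal.span ({lin (a i), lin (a j)} : Set (MvPolynomial (Fin ℓ) ℂ)))
    (hPrime : P.IsPrime) :
    Ideal.map (algebraMap (MvPolynomial (Fin ℓ) ℂ)
        (Localization (@Ideal.primeCompl _ _ P hPrime)))
        (jac (∏ k, lin (a k)))
      = Ideal.map (algebraMap (MvPolynomial (Fin ℓ) ℂ)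
          (Localization (@Ideal.primeCompl _ _ P hPrime)))
          (jac (∏ k ∈ Finset.univ.filter (fun k => lin (a k) ∈ P), lin (a k)))
    ∧ Ideal.comap (algebraMap (MvPolynomial (Fin ℓ) ℂ)
        (Localization (@Ideal.primeCompl _ _ P hPrime)))
        (Ideal.map (algebraMap (MvPolynomial (Fin ℓ) ℂ)
          (Localization (@Ideal.primeCompl _ _ P hPrime)))
          (jac (∏ k, lin (a k))))
      = jac (∏ k ∈ Finset.univ.filter (fun k => lin (a k) ∈ P), lin (a k)) := by
  have hind : LinearIndependent ℂ ![a i, a j] := by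
    rw [LinearIndependent.pair_iff' (ha0 i)]
    intro c hc
    exact haprop j i hij.symm c hc.symm
  have hP' : P = Ideal.span {lin (![a i, a j] 0), lin (![a i, a j] 1)} := by simpa using hP
  set K := Finset.univ.filter (fun k => lin (a k) ∈ P) with hK
  have hspan : ∀ k ∈ K, ∃ c d : ℂ, a k = c • a i + d • a j := by
    intro k hk
    have := (Finset.mem_filter.mp hk).2
    rw [hP] at this
    exact exists_of_lin_mem this
  have hiK : i ∈ K := by
    simp only [hK, Finset.mem_filter, Finset.mem_univ, true_and, hP]
    exact Ideal.subset_span (by simp)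
  have hcard : (K.card : ℂ) ≠ 0 := by
    exact_mod_cast (Finset.card_pos.mpr ⟨i, hiK⟩).ne'
  set q := ∏ k ∈ K, lin (a k) with hq
  set R := ∏ k ∈ Finset.univ.filter (fun k => lin (a k) ∉ P), lin (a k) with hR
  have hprod : ∏ k, lin (a k) = q * R :=
    (Finset.prod_filter_mul_prod_filter_not Finset.univ (fun k => lin (a k) ∈ P) _).symm
  have hRP : R ∉ P := by
    rw [hR, hPrime.prod_mem_iff]
    rintro ⟨k, hk, hkP⟩
    exact (Finset.mem_filter.mp hk).2 hkP
  obtain ⟨θ, hθP, hθJ, hθlin⟩ := exists_euler ![a i, a j] hind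
  rw [← hP'] at hθP
  have hθq : θ q = C (K.card : ℂ) * q := by
    rw [hq, derivation_prod_eigen θ K]
    · simp
    · intro k hk
      obtain ⟨c, d, hcd⟩ := hspan k hk
      rw [hcd]
      exact hθlin c d
  have hCinv : (C (K.card : ℂ)⁻¹ * C (K.card : ℂ) : MvPolynomial (Fin ℓ) ℂ) = 1 := by
    rw [← C_mul, inv_mul_cancel₀ hcard, C_1]
  have hqJ : q ∈ jac q := by
    have := Ideal.mul_mem_left _ (C (K.card : ℂ)⁻¹) (hθJ q)
    rwa [hθq, ← mul_assoc, hCinv, one_mul] at this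
  have hle : jac (q * R) ≤ jac q := by
    rw [jac, Ideal.span_le]
    rintro _ ⟨k, rfl⟩
    change pderiv k _ ∈ _
    rw [pderiv_mul]
    exact Ideal.add_mem _ (Ideal.mul_mem_right _ _ (pderiv_mem_jac k q))
      (Ideal.mul_mem_right _ _ hqJ)
  -- `θ (q R) = q (m R + θ R)` with `m R + θ R` a unit at `P`, so `q` lies locally in `J(q R)`.
  set U := C (K.card : ℂ) * R + θ R with hU
  have hUP : U ∉ P := by
    intro h
    have h1 := (Ideal.add_mem_iff_left _ (hθP R)).mp h
    have h2 := Ideal.mul_mem_left P (C (K.card : ℂ)⁻¹) h1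
    rw [← mul_assoc, hCinv, one_mul] at h2
    exact hRP h2
  have hθQ : q * U ∈ jac (q * R) := by
    have := hθJ (q * R)
    rw [Derivation.leibniz, hθq, smul_eq_mul, smul_eq_mul] at this
    convert this using 1
    rw [hU]; ring
  have hURP : U * R ∈ P.primeCompl := fun h => (hPrime.mem_or_mem h).elim hUP hRP
  have hge : ∀ f ∈ jac q, U * R * f ∈ jac (q * R) := by
    intro f hf
    induction hf using Submodule.span_induction with
    | mem f hf =>
      obtain ⟨k, rfl⟩ := hf
      have h1 := Ideal.mul_mem_left _ U (pderiv_mem_jac k (q * R))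
      have h2 := Ideal.mul_mem_right (pderiv k R) _ hθQ
      have h3 := Ideal.sub_mem _ h1 h2
      rw [pderiv_mul] at h3
      convert h3 using 1
      ring
    | zero => simp
    | add f g _ _ hf hg => rw [mul_add]; exact Ideal.add_mem _ hf hg
    | smul r f _ hf => rw [smul_eq_mul, mul_left_comm]; exact Ideal.mul_mem_left _ _ hf
  have hmap : Ideal.map (algebraMap (MvPolynomial (Fin ℓ) ℂ) (Localization P.primeCompl))
      (jac (q * R)) = Ideal.map (algebraMap _ (Localization P.primeCompl)) (jac q) := by
    apply le_antisymm (Ideal.map_mono hle)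
    rw [Ideal.map_le_iff_le_comap]
    intro f hf
    rw [Ideal.mem_comap, IsLocalization.algebraMap_mem_map_algebraMap_iff P.primeCompl]
    exact ⟨U * R, hURP, hge f hf⟩
  rw [hprod]
  refine ⟨hmap, ?_⟩
  rw [hmap]
  apply le_antisymm _ Ideal.le_comap_map
  intro f hf
  rw [Ideal.mem_comap, IsLocalization.algebraMap_mem_map_algebraMap_iff P.primeCompl] at hf
  obtain ⟨s, hs, hsf⟩ := hf
  have hrad : P ≤ (jac q).radical := by
    rw [hP]
    exact span_le_radical_jac K a (a i) (a j) (fun k _ => ha0 k)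
      (fun k _ l _ hkl => haprop k l hkl) hspan hqJ
  choose! c d hcd using hspan
  have hqF : q = aeval (fun t => lin (![a i, a j] t))
      (∏ k ∈ K, (C (c k) * X 0 + C (d k) * X 1) : MvPolynomial (Fin 2) ℂ) := by
    rw [hq, map_prod]
    refine Finset.prod_congr rfl fun k hk => ?_
    conv_lhs => rw [hcd k hk, lin_add, lin_smul, lin_smul]
    simp [algebraMap_eq]
  rw [hP', hqF] at hrad
  rw [hqF] at hsf ⊢
  exact jac_saturated _ hind _ hrad s f (fun h => hs (hP' ▸ h)) hsf
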